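/- Under the alternative model H₁ with community size k = o(n), for any p ≥ 2 and any ordered path of distinct vertices 𝒫 = (a_1,…,a_p), the probability (over both the uniform torus positions of the type-B vertices and the independent edge indicators) that all consecutive edges of the path are present factorizes as P₁(a_1 ↔ a_2 ↔ … ↔ a_p) = Π_{i=1}^{p-1} P₁(a_i ↔ a_{i+1}), and if m denotes the number of consecutive pairs (a_i, a_{i+1}) in which both vertices are type-B, then this probability is O( w_{a_1}^{-1} w_{a_p}^{-1} Π_{i=1}^{p} w_{a_i}² / (k^m n^{p-m-1}) ). -/

import Mathlib

open MeasureTheory ProbabilityTheory Filter Finset Asymptotics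
open scoped Topology ENNReal NNReal Classical

noncomputable section

/-- The torus distance on `[0,1]^d`:
`‖x - y‖ = sup_i min (|x i - y i|) (1 - |x i - y i|)`. -/
def torusDist (d : ℕ) (x y : Fin d → ℝ) : ℝ :=
  ⨆ i : Fin d, min |x i - y i| (1 - |x i - y i|)

/-- The uniform probability measure on `[0,1]`. -/
def unifI : Measure ℝ := volume.restrict (Set.Icc 0 1)

/-- The uniform probability measure on the cube `[0,1]^d`. -/
def unifCube (d : ℕ) : Measure (Fin d → ℝ) := volume.restrict (Set.Icc 0 1)

/-- Assumption 1: the empirical weight distribution has a power-law tail,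
`1 - F_n(x) = C x^(1-τ) (1 + o(1))` uniformly for `w0 ≤ x ≤ n^(1/(τ-1)) / log n`. -/
def Assumption1 (τ C w0 : ℝ) (w : (n : ℕ) → Fin n → ℝ) : Prop :=
  ∀ ε > (0:ℝ), ∃ N : ℕ, ∀ n ≥ N, ∀ x : ℝ, w0 ≤ x →
    x ≤ (n : ℝ) ^ ((1:ℝ) / (τ - 1)) / Real.log n →
    |((univ.filter fun i : Fin n => x < w n i).card : ℝ) / n - C * x ^ (1 - τ)|
      ≤ ε * (C * x ^ (1 - τ))

/-- Assumption 2: the empirical distribution of the community weights has a power-law tail,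
`1 - F_k(x) = C x^(1-τ) (1 + o(1))` for `w0 ≤ x = O(k^(1/(τ-1)) / log k)`.
The community consists of the vertices `i` with `i.val < k n`. -/
def Assumption2 (τ C w0 : ℝ) (k : ℕ → ℕ) (w : (n : ℕ) → Fin n → ℝ) : Prop :=
  ∀ A > (0:ℝ), ∀ ε > (0:ℝ), ∃ N : ℕ, ∀ n ≥ N, ∀ x : ℝ, w0 ≤ x →
    x ≤ A * (k n : ℝ) ^ ((1:ℝ) / (τ - 1)) / Real.log (k n) →
    |((univ.filter fun i : Fin n => i.val < k n ∧ x < w n i).card : ℝ) / (k n)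
      - C * x ^ (1 - τ)| ≤ ε * (C * x ^ (1 - τ))

/-- `μ = E[X] = C (τ-1)/(τ-2) w₀^(2-τ)`, the mean of the Pareto distribution. -/
def muPar (τ C w0 : ℝ) : ℝ := C * (τ - 1) / (τ - 2) * w0 ^ (2 - τ)

/-- IRG connection probability `p_{ij} = min (w_i w_j / (μ n)) 1`. -/
def pIRG (n : ℕ) (μ : ℝ) (w : Fin n → ℝ) (i j : Fin n) : ℝ :=
  min (w i * w j / (μ * n)) 1

/-- The correction constant `C₁ = (1 + (γ-1)⁻¹) 2^d`. -/
def C1 (d : ℕ) (γ : ℝ) : ℝ := (1 + (γ - 1)⁻¹) * 2 ^ d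

/-- The geometric (GIRG) connection probability
`min (w_i w_j / (μ k ‖x-y‖^d)) 1 ^ γ` (without the correction factor). -/
def pGIRG (k d : ℕ) (γ μ wi wj : ℝ) (x y : Fin d → ℝ) : ℝ :=
  (min (wi * wj / (μ * k * torusDist d x y ^ d)) 1) ^ γ

/-- The connection probability under the alternative model `H₁`: type-B vertices are the
vertices `i` with `i.val < k`; two type-B vertices use the geometric rule, any other pair
uses the IRG rule; both carry the correction factor `(1 + C₁)⁻¹`. -/
def pH1 (n k d : ℕ) (γ μ : ℝ) (w : Fin n → ℝ) (pos : Fin n → Fin d → ℝ) (i j : Fin n) : ℝ :=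
  if i.val < k ∧ j.val < k then
    (1 + C1 d γ)⁻¹ * pGIRG k d γ μ (w i) (w j) (pos i) (pos j)
  else (1 + C1 d γ)⁻¹ * pIRG n μ w i j

/-- Sample space of the alternative model: a uniform position on the torus for every vertex
(only those of the community members are used) and an independent uniform `[0,1]` variable
for every pair of vertices, generating the conditionally independent edge indicators. -/
abbrev H1Space (n d : ℕ) := (Fin n → Fin d → ℝ) × (Fin n → Fin n → ℝ)

/-- The law `P₁` of the alternative model (positions and edge-generating uniforms). -/
def H1Measure (n d : ℕ) : Measure (H1Space n d) :=
  (Measure.pi fun _ : Fin n => unifCube d).prod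
    (Measure.pi fun _ : Fin n => Measure.pi fun _ : Fin n => unifI)

/-- Under `H₁`, the edge `{i,j}` is present iff the uniform variable attached to the pair
`{i,j}` is at most `p_{ij}` (which depends on the positions); no self-loops. -/
def edgeH1 (n k d : ℕ) (γ μ : ℝ) (w : Fin n → ℝ) (ω : H1Space n d) (i j : Fin n) : Prop :=
  i ≠ j ∧ ω.2 (min i j) (max i j) ≤ pH1 n k d γ μ w ω.1 i j

def triH1 (n k d : ℕ) (γ μ : ℝ) (w : Fin n → ℝ) (ω : H1Space n d) (a b c : Fin n) : Prop :=
  edgeH1 n k d γ μ w ω a b ∧ edgeH1 n k d γ μ w ω b c ∧ edgeH1 n k d γ μ w ω c a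

/-- The weighted triangle statistic under `H₁`. -/
def WH1 (n k d : ℕ) (γ μ : ℝ) (w : Fin n → ℝ) (ω : H1Space n d) : ℝ :=
  ∑ a : Fin n, ∑ b : Fin n, ∑ c : Fin n,
    if triH1 n k d γ μ w ω a b c then (w a * w b * w c)⁻¹ else 0

/-- The local weighted triangle statistic
`W(a) = (n / w_a²) Σ_{b,c} (w_b w_c)⁻¹ 1{a,b,c triangle}`. -/
def WlocH1 (n k d : ℕ) (γ μ : ℝ) (w : Fin n → ℝ) (a : Fin n) (ω : H1Space n d) : ℝ :=
  ((n : ℝ) / w a ^ 2) * ∑ b : Fin n, ∑ c : Fin n,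
    if triH1 n k d γ μ w ω a b c then (w b * w c)⁻¹ else 0

/-- The number of geometric (type-B/type-B) consecutive pairs along the path `a`. -/
def pathGeoCount (n kn p : ℕ) (a : Fin (p + 1) → Fin n) : ℕ :=
  (univ.filter fun i : Fin p => (a i.castSucc).val < kn ∧ (a i.succ).val < kn).card

instance : IsProbabilityMeasure unifI := ⟨by simp [unifI]⟩

theorem unifCube_eq_pi (d : ℕ) : unifCube d = Measure.pi fun _ : Fin d => unifI := by
  rw [unifCube, volume_pi, ← Set.pi_univ_Icc, Measure.restrict_pi_pi]
  rfl

instance (d : ℕ) : IsProbabilityMeasure (unifCube d) := by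
  rw [unifCube_eq_pi]; infer_instance

/-- Reading off the coordinates along an injection preserves product probability measures. -/
theorem measurePreserving_comp_injective {ι κ X : Type*} [Fintype ι] [Fintype κ]
    [MeasurableSpace X] (ν : Measure X) [IsProbabilityMeasure ν] (e : ι → κ)
    (he : Function.Injective e) :
    MeasurePreserving (fun (u : κ → X) (i : ι) => u (e i))
      (Measure.pi fun _ => ν) (Measure.pi fun _ => ν) := by
  have hm : Measurable (fun (u : κ → X) (i : ι) => u (e i)) := by fun_prop
  refine ⟨hm, (Measure.pi_eq fun s hs => ?_).symm⟩
  rw [Measure.map_apply hm (.univ_pi hs)]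
  have : (fun (u : κ → X) (i : ι) => u (e i)) ⁻¹' Set.univ.pi s
      = Set.univ.pi (Function.extend e s fun _ => Set.univ) := by
    ext u
    simp only [Set.mem_preimage, Set.mem_univ_pi]
    refine ⟨fun h j => ?_, fun h i => by simpa [he.extend_apply] using h (e i)⟩
    by_cases hj : ∃ i, e i = j
    · obtain ⟨i, rfl⟩ := hj
      simpa [he.extend_apply] using h i
    · simp [Function.extend_apply' _ _ _ hj]
  rw [this, Measure.pi_pi]
  refine (Fintype.prod_of_injective e he _ _ (fun j hj => ?_) fun i => ?_).symm
  · rw [Function.extend_apply' _ _ _ (by simpa using hj)]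
    exact measure_univ
  · rw [he.extend_apply]

/-- Uncurrying an iterated product probability measure. -/
theorem measurePreserving_uncurry {ι κ X : Type*} [Fintype ι] [Fintype κ]
    [MeasurableSpace X] (ν : Measure X) [IsProbabilityMeasure ν] :
    MeasurePreserving (fun (u : ι → κ → X) (q : ι × κ) => u q.1 q.2)
      (Measure.pi fun _ => Measure.pi fun _ => ν) (Measure.pi fun _ => ν) := by
  have hm : Measurable (fun (u : ι → κ → X) (q : ι × κ) => u q.1 q.2) := by fun_prop
  refine ⟨hm, (Measure.pi_eq fun s hs => ?_).symm⟩
  rw [Measure.map_apply hm (.univ_pi hs)]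
  have : (fun (u : ι → κ → X) (q : ι × κ) => u q.1 q.2) ⁻¹' Set.univ.pi s
      = Set.univ.pi fun r => Set.univ.pi fun t => s (r, t) := by
    ext u
    simp
  simp only [this, Measure.pi_pi, Fintype.prod_prod_type]

/-- Integrating a product of kernels along a path of independent points, when each kernel has
a constant marginal. -/
theorem lintegral_prod_path {X : Type*} [MeasurableSpace X] (ν : Measure X)
    [IsProbabilityMeasure ν] {p : ℕ} (G : Fin p → X → X → ℝ≥0∞) (c : Fin p → ℝ≥0∞)
    (hG : ∀ i, Measurable (Function.uncurry (G i)))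
    (hc : ∀ i, ∀ᵐ y ∂ν, ∫⁻ x, G i x y ∂ν = c i) :
    ∫⁻ x : Fin (p + 1) → X, ∏ i, G i (x i.castSucc) (x i.succ) ∂(Measure.pi fun _ => ν)
      = ∏ i, c i := by
  induction p with
  | zero => simp
  | succ p ih =>
    have hmeas : ∀ (i : Fin (p + 1)) (f g : (X × (Fin (p + 1) → X)) → X), Measurable f →
        Measurable g → Measurable fun z => G i (f z) (g z) := fun i f g hf hg =>
      (hG i).comp (hf.prodMk hg)
    have key : ∫⁻ x : Fin (p + 1 + 1) → X, ∏ i, G i (x i.castSucc) (x i.succ)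
          ∂(Measure.pi fun _ => ν)
        = ∫⁻ z : X × (Fin (p + 1) → X), G 0 z.1 (z.2 0) *
            ∏ i : Fin p, G i.succ (z.2 i.castSucc) (z.2 i.succ)
          ∂(ν.prod (Measure.pi fun _ => ν)) := by
      have h := (measurePreserving_piFinSuccAbove (fun _ : Fin (p + 1 + 1) => ν) 0)
      rw [← h.lintegral_comp_emb (MeasurableEquiv.measurableEmbedding _)]
      refine lintegral_congr fun x => ?_
      rw [Fin.prod_univ_succ]
      rfl
    rw [key, lintegral_prod_symm]
    · have h0 : ∀ᵐ y ∂(Measure.pi fun _ : Fin (p + 1) => ν),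
          ∫⁻ x, G 0 x (y 0) ∂ν = c 0 :=
        (measurePreserving_eval (fun _ : Fin (p + 1) => ν) 0).quasiMeasurePreserving.ae (hc 0)
      rw [lintegral_congr_ae (g := fun y => c 0 *
          ∏ i : Fin p, G i.succ (y i.castSucc) (y i.succ)), lintegral_const_mul,
          ih (fun i => G i.succ) (fun i => c i.succ) (fun i => hG _) (fun i => hc _),
          Fin.prod_univ_succ]
      · exact Finset.measurable_prod _ fun i _ =>
          (hG i.succ).comp (f := fun y : Fin (p + 1) → X => (y i.castSucc, y i.succ))
            ((measurable_pi_apply _).prodMk (measurable_pi_apply _))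
      · filter_upwards [h0] with y hy
        rw [lintegral_mul_const, hy]
        exact (hG 0).comp (measurable_id.prodMk measurable_const)
    · refine (Measurable.mul (hmeas _ _ _ (by fun_prop) (by fun_prop)) ?_).aemeasurable
      exact Finset.measurable_prod _ fun i _ => hmeas _ _ _ (by fun_prop) (by fun_prop)

/-- The covering map from the cube to the torus. -/
def toTorus (d : ℕ) (x : Fin d → ℝ) : Fin d → UnitAddCircle := fun i => (x i : UnitAddCircle)

theorem measurePreserving_toTorus (d : ℕ) :
    MeasurePreserving (toTorus d) (unifCube d) volume := by
  rw [unifCube_eq_pi]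
  refine measurePreserving_pi (fun _ : Fin d => unifI)
    (fun _ => (volume : Measure UnitAddCircle)) fun _ => ?_
  have := UnitAddCircle.measurePreserving_mk 0
  rwa [zero_add, Measure.restrict_congr_set Ioc_ae_eq_Icc] at this

theorem torusDist_eq_norm {d : ℕ} {x y : Fin d → ℝ} (hx : x ∈ Set.Icc 0 1)
    (hy : y ∈ Set.Icc 0 1) : torusDist d x y = ‖toTorus d x - toTorus d y‖ := by
  have hcoord : ∀ i, min |x i - y i| (1 - |x i - y i|) = ‖(toTorus d x - toTorus d y) i‖ := by
    intro i
    have h1 : |x i - y i| ≤ 1 := by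
      have := hx.1 i; have := hx.2 i; have := hy.1 i; have := hy.2 i
      simp only [Pi.zero_apply, Pi.one_apply] at *
      rw [abs_le]; constructor <;> linarith
    have h2 : ‖((x i - y i : ℝ) : UnitAddCircle)‖ = ‖((|x i - y i| : ℝ) : UnitAddCircle)‖ := by
      rcases abs_cases (x i - y i) with h | h <;> rw [h.1]
      rw [AddCircle.coe_neg, norm_neg]
    have h3 : (toTorus d x - toTorus d y) i = ((x i - y i : ℝ) : UnitAddCircle) := by
      simp [toTorus]
    rw [h3, h2, UnitAddCircle.norm_eq, abs_sub_round_eq_min]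
    rcases h1.lt_or_eq with h | h
    · rw [Int.fract_eq_self.2 ⟨abs_nonneg _, h⟩]
    · simp [h]
  rw [torusDist, Pi.norm_def, Finset.sup_univ_eq_ciSup, NNReal.coe_iSup]
  exact iSup_congr hcoord

theorem measurable_torusDist (d : ℕ) :
    Measurable fun z : (Fin d → ℝ) × (Fin d → ℝ) => torusDist d z.1 z.2 := by
  unfold torusDist
  refine Measurable.iSup fun i => ?_
  fun_prop

/-- The connection probability of the pair `i`, `j` as a function of the distance. -/
def edgeKernel (n k d : ℕ) (γ μ : ℝ) (w : Fin n → ℝ) (i j : Fin n) (r : ℝ) : ℝ :=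
  if i.val < k ∧ j.val < k then
    (1 + C1 d γ)⁻¹ * (min (w i * w j / (μ * k * r ^ d)) 1) ^ γ
  else (1 + C1 d γ)⁻¹ * pIRG n μ w i j

theorem measurable_edgeKernel (n k d : ℕ) (γ μ : ℝ) (w : Fin n → ℝ) (i j : Fin n) :
    Measurable (edgeKernel n k d γ μ w i j) := by
  unfold edgeKernel
  split_ifs <;> fun_prop

theorem measurable_unifI_Iic : Measurable fun t : ℝ => unifI (Set.Iic t) :=
  Monotone.measurable fun _ _ h => measure_mono (Set.Iic_subset_Iic.2 h)

/-- The probability that two given vertices are connected, written as an integral over the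
difference of their positions on the torus. -/
def edgeProb (n k d : ℕ) (γ μ : ℝ) (w : Fin n → ℝ) (i j : Fin n) : ℝ≥0∞ :=
  ∫⁻ z : Fin d → UnitAddCircle, unifI (Set.Iic (edgeKernel n k d γ μ w i j ‖z‖))

theorem ae_lintegral_eq_edgeProb (n k d : ℕ) (γ μ : ℝ) (w : Fin n → ℝ) (i j : Fin n) :
    ∀ᵐ y ∂unifCube d, ∫⁻ x, unifI (Set.Iic (edgeKernel n k d γ μ w i j (torusDist d x y)))
      ∂unifCube d = edgeProb n k d γ μ w i j := by
  have hcube : ∀ᵐ y ∂unifCube d, y ∈ Set.Icc (0 : Fin d → ℝ) 1 :=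
    ae_restrict_mem measurableSet_Icc
  have hm : Measurable fun z : Fin d → UnitAddCircle =>
      unifI (Set.Iic (edgeKernel n k d γ μ w i j ‖z‖)) :=
    measurable_unifI_Iic.comp ((measurable_edgeKernel ..).comp measurable_norm)
  filter_upwards [hcube] with y hy
  calc ∫⁻ x, unifI (Set.Iic (edgeKernel n k d γ μ w i j (torusDist d x y))) ∂unifCube d
      = ∫⁻ x, unifI (Set.Iic (edgeKernel n k d γ μ w i j ‖toTorus d x - toTorus d y‖))
          ∂unifCube d := by
        refine lintegral_congr_ae ?_
        filter_upwards [hcube] with x hx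
        rw [torusDist_eq_norm hx hy]
    _ = ∫⁻ z : Fin d → UnitAddCircle,
          unifI (Set.Iic (edgeKernel n k d γ μ w i j ‖z - toTorus d y‖)) :=
        (measurePreserving_toTorus d).lintegral_comp
          (f := fun z => unifI (Set.Iic (edgeKernel n k d γ μ w i j ‖z - toTorus d y‖)))
          (hm.comp (measurable_id.sub_const _))
    _ = edgeProb n k d γ μ w i j :=
        lintegral_sub_right_eq_self
          (fun z => unifI (Set.Iic (edgeKernel n k d γ μ w i j ‖z‖))) _

theorem injective_path_pairs {n p : ℕ} {a : Fin (p + 1) → Fin n} (ha : Function.Injective a) :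
    Function.Injective fun i : Fin p =>
      (min (a i.castSucc) (a i.succ), max (a i.castSucc) (a i.succ)) := by
  intro i j h
  simp only [Prod.mk.injEq] at h
  have : (a i.castSucc = a j.castSucc ∧ a i.succ = a j.succ) ∨
      (a i.castSucc = a j.succ ∧ a i.succ = a j.castSucc) := by
    grind
  rcases this with h | h
  · exact Fin.castSucc_injective _ (ha h.1)
  · have h1 := congrArg Fin.val (ha h.1)
    have h2 := congrArg Fin.val (ha h.2)
    simp only [Fin.val_castSucc, Fin.val_succ] at h1 h2
    omega

theorem H1Measure_path (n k d : ℕ) (γ μ : ℝ) (w : Fin n → ℝ) {p : ℕ} (a : Fin (p + 1) → Fin n)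
    (ha : Function.Injective a) :
    H1Measure n d {ω | ∀ i : Fin p, edgeH1 n k d γ μ w ω (a i.castSucc) (a i.succ)}
      = ∏ i : Fin p, edgeProb n k d γ μ w (a i.castSucc) (a i.succ) := by
  set q : Fin p → ℝ → ℝ := fun i => edgeKernel n k d γ μ w (a i.castSucc) (a i.succ)
  have hqm : ∀ i, Measurable (q i) := fun i => measurable_edgeKernel ..
  have hset : {ω : H1Space n d | ∀ i : Fin p, edgeH1 n k d γ μ w ω (a i.castSucc) (a i.succ)}
      = {ω | ∀ i : Fin p, ω.2 (min (a i.castSucc) (a i.succ)) (max (a i.castSucc) (a i.succ))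
          ≤ q i (torusDist d (ω.1 (a i.castSucc)) (ω.1 (a i.succ)))} := by
    ext ω
    refine forall_congr' fun i => and_iff_right fun h => ?_
    exact i.castSucc_lt_succ.ne (ha h)
  have hmeas : MeasurableSet {ω : H1Space n d |
      ∀ i : Fin p, ω.2 (min (a i.castSucc) (a i.succ)) (max (a i.castSucc) (a i.succ))
          ≤ q i (torusDist d (ω.1 (a i.castSucc)) (ω.1 (a i.succ)))} := by
    rw [Set.ofPred_forall]
    refine MeasurableSet.iInter fun i => measurableSet_le (by fun_prop) ?_
    exact (hqm i).comp ((measurable_torusDist d).comp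
      (f := fun ω : H1Space n d => (ω.1 (a i.castSucc), ω.1 (a i.succ))) (by fun_prop))
  have hslice : ∀ t : Fin p → ℝ,
      (Measure.pi fun _ : Fin n => Measure.pi fun _ : Fin n => unifI)
        {u | ∀ i : Fin p, u (min (a i.castSucc) (a i.succ)) (max (a i.castSucc) (a i.succ)) ≤ t i}
      = ∏ i, unifI (Set.Iic (t i)) := by
    intro t
    have h := (measurePreserving_comp_injective unifI _ (injective_path_pairs ha)).comp
      (measurePreserving_uncurry (ι := Fin n) (κ := Fin n) unifI)
    rw [← Measure.pi_pi, ← h.measure_preimage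
      (MeasurableSet.univ_pi fun i => measurableSet_Iic).nullMeasurableSet]
    congr 1
    ext u
    simp [Pi.le_def]
  have hG : ∀ i, Measurable (Function.uncurry fun x y => unifI (Set.Iic (q i (torusDist d x y)))) :=
    fun i => measurable_unifI_Iic.comp ((hqm i).comp (measurable_torusDist d))
  have hGa : Measurable fun x : Fin (p + 1) → Fin d → ℝ =>
      ∏ i : Fin p, unifI (Set.Iic (q i (torusDist d (x i.castSucc) (x i.succ)))) :=
    Finset.measurable_prod _ fun i _ =>
      (hG i).comp (f := fun x : Fin (p + 1) → Fin d → ℝ => (x i.castSucc, x i.succ)) (by fun_prop)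
  rw [hset, H1Measure, Measure.prod_apply hmeas]
  calc _ = ∫⁻ pos : Fin n → Fin d → ℝ,
          ∏ i : Fin p, unifI (Set.Iic (q i (torusDist d (pos (a i.castSucc)) (pos (a i.succ)))))
          ∂(Measure.pi fun _ => unifCube d) := lintegral_congr fun pos => hslice _
    _ = ∫⁻ x : Fin (p + 1) → Fin d → ℝ,
          ∏ i : Fin p, unifI (Set.Iic (q i (torusDist d (x i.castSucc) (x i.succ))))
          ∂(Measure.pi fun _ => unifCube d) :=
        (measurePreserving_comp_injective (unifCube d) a ha).lintegral_comp hGa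
    _ = _ := lintegral_prod_path (unifCube d)
          (fun i x y => unifI (Set.Iic (q i (torusDist d x y)))) _ hG
          fun i => ae_lintegral_eq_edgeProb ..

theorem H1Measure_edge (n k d : ℕ) (γ μ : ℝ) (w : Fin n → ℝ) {i j : Fin n} (hij : i ≠ j) :
    H1Measure n d {ω | edgeH1 n k d γ μ w ω i j} = edgeProb n k d γ μ w i j := by
  have ha : Function.Injective ![i, j] := by
    intro x y h
    fin_cases x <;> fin_cases y <;> simp_all [eq_comm]
  simpa using H1Measure_path n k d γ μ w (p := 1) ![i, j] ha

theorem volume_torus_closedBall_le (d : ℕ) {r : ℝ} (hr : 0 ≤ r) :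
    volume (Metric.closedBall (0 : Fin d → UnitAddCircle) r) ≤ ENNReal.ofReal ((2 * r) ^ d) := by
  rw [closedBall_pi _ hr, volume_pi_pi]
  calc ∏ i : Fin d, volume (Metric.closedBall ((0 : Fin d → UnitAddCircle) i) r)
      ≤ ∏ _i : Fin d, ENNReal.ofReal (2 * r) :=
        Finset.prod_le_prod' fun i _ => by
          rw [AddCircle.volume_closedBall]
          exact ENNReal.ofReal_le_ofReal (min_le_right _ _)
    _ = ENNReal.ofReal ((2 * r) ^ d) := by
        rw [Finset.prod_const, Finset.card_univ, Fintype.card_fin,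
          ENNReal.ofReal_pow (by positivity)]

theorem unifI_Iic_le (t : ℝ) : unifI (Set.Iic t) ≤ ENNReal.ofReal t := by
  rw [unifI, Measure.restrict_apply measurableSet_Iic]
  calc volume (Set.Iic t ∩ Set.Icc 0 1) ≤ volume (Set.Icc 0 t) :=
        measure_mono fun x hx => ⟨hx.2.1, hx.1⟩
    _ = ENNReal.ofReal t := by simp

theorem C1_pos (d : ℕ) {γ : ℝ} (hγ : 1 < γ) : 0 < C1 d γ := by
  have : 0 < γ - 1 := by linarith
  unfold C1
  positivity

theorem lintegral_ofReal_rpow_inv {γ b : ℝ} (hγ : 1 < γ) (hb : 0 ≤ b) :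
    ∫⁻ u, ENNReal.ofReal (b * u ^ (-γ⁻¹)) ∂unifI = ENNReal.ofReal (b * (1 + (γ - 1)⁻¹)) := by
  have h1 : (-1 : ℝ) < -γ⁻¹ := by
    have := inv_lt_one_of_one_lt₀ hγ
    linarith
  have hint := (intervalIntegral.intervalIntegrable_rpow' (a := 0) (b := 1) h1).const_mul b
  rw [intervalIntegrable_iff_integrableOn_Ioc_of_le zero_le_one] at hint
  rw [unifI, ← Measure.restrict_congr_set Ioc_ae_eq_Icc, ← ofReal_integral_eq_lintegral_ofReal hint,
    ← intervalIntegral.integral_of_le zero_le_one, intervalIntegral.integral_const_mul,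
    integral_rpow (Or.inl h1)]
  · congr 1
    have h2 : γ - 1 ≠ 0 := by linarith
    have h3 : γ ≠ 0 := by linarith
    have h4 : -γ⁻¹ + 1 ≠ 0 := by linarith
    rw [Real.one_rpow, Real.zero_rpow h4]
    have h5 : -γ⁻¹ + 1 = (γ - 1) / γ := by field_simp; ring
    rw [h5]
    field_simp
    ring
  · filter_upwards [ae_restrict_mem measurableSet_Ioc] with u hu
    have := hu.1
    positivity

theorem lintegral_geometric_le {d : ℕ} (hd : 1 ≤ d) {γ c : ℝ} (hγ : 1 < γ) (hc : 0 ≤ c) :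
    ∫⁻ z : Fin d → UnitAddCircle, unifI (Set.Iic ((min (c / ‖z‖ ^ d) 1) ^ γ))
      ≤ ENNReal.ofReal (C1 d γ * c) := by
  have hγ0 : 0 < γ := by linarith
  have hd0 : d ≠ 0 := by omega
  have hmeas : MeasurableSet {q : (Fin d → UnitAddCircle) × ℝ |
      q.2 ≤ (min (c / ‖q.1‖ ^ d) 1) ^ γ} :=
    measurableSet_le (by fun_prop) (by fun_prop)
  have hswap := (Measure.prod_apply (μ := (volume : Measure (Fin d → UnitAddCircle)))
    (ν := unifI) hmeas).symm.trans (Measure.prod_apply_symm hmeas)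
  calc _ = ∫⁻ u, volume {z : Fin d → UnitAddCircle | u ≤ (min (c / ‖z‖ ^ d) 1) ^ γ} ∂unifI :=
        hswap
    _ ≤ ∫⁻ u, ENNReal.ofReal (2 ^ d * c * u ^ (-γ⁻¹)) ∂unifI := by
        refine lintegral_mono_ae ?_
        have hpos : ∀ᵐ u ∂unifI, 0 < u := by
          rw [unifI, ← Measure.restrict_congr_set Ioc_ae_eq_Icc]
          filter_upwards [ae_restrict_mem measurableSet_Ioc] with u hu using hu.1
        filter_upwards [hpos] with u hu
        have hR0 : 0 ≤ c * u ^ (-γ⁻¹) := by positivity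
        set R : ℝ := (c * u ^ (-γ⁻¹)) ^ ((d : ℝ)⁻¹)
        have hRd : R ^ d = c * u ^ (-γ⁻¹) := Real.rpow_inv_natCast_pow hR0 hd0
        have hRnn : 0 ≤ R := by positivity
        calc volume {z : Fin d → UnitAddCircle | u ≤ (min (c / ‖z‖ ^ d) 1) ^ γ}
            ≤ volume (Metric.closedBall (0 : Fin d → UnitAddCircle) R) := by
              refine measure_mono fun z hz => ?_
              rw [mem_closedBall_zero_iff]
              refine le_of_pow_le_pow_left₀ hd0 hRnn ?_
              rw [hRd, Real.rpow_neg hu.le, ← div_eq_mul_inv]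
              have hm : 0 ≤ min (c / ‖z‖ ^ d) 1 := by positivity
              have h1 : u ^ γ⁻¹ ≤ c / ‖z‖ ^ d :=
                ((Real.rpow_inv_le_iff_of_pos hu.le hm hγ0).2 hz).trans (min_le_left _ _)
              have hup : 0 < u ^ γ⁻¹ := by positivity
              rcases eq_or_ne ‖z‖ 0 with h0 | h0
              · rw [h0, zero_pow hd0]; positivity
              · have : 0 < ‖z‖ ^ d := by positivity
                rw [le_div_iff₀ hup]
                rw [le_div_iff₀ this] at h1
                linarith
          _ ≤ ENNReal.ofReal ((2 * R) ^ d) := volume_torus_closedBall_le d hRnn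
          _ = ENNReal.ofReal (2 ^ d * c * u ^ (-γ⁻¹)) := by
              rw [mul_pow, hRd, mul_assoc]
    _ = ENNReal.ofReal (C1 d γ * c) := by
        rw [lintegral_ofReal_rpow_inv hγ (by positivity), C1]
        congr 1
        ring

/-- The probability of an edge is at most of order `w_i w_j / k` for a pair of community
members, and of order `w_i w_j / n` for any other pair. -/
theorem edgeProb_le {n k d : ℕ} (hd : 1 ≤ d) {γ μ : ℝ} (hγ : 1 < γ) (hμ : 0 < μ) (w : Fin n → ℝ)
    (hw : ∀ i, 0 < w i) (i j : Fin n) :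
    edgeProb n k d γ μ w i j ≤ ENNReal.ofReal ((C1 d γ + 1) / μ *
      (w i * w j / if i.val < k ∧ j.val < k then (k : ℝ) else n)) := by
  have hC := C1_pos d hγ
  have hi := hw i
  have hj := hw j
  have hq : (1 + C1 d γ)⁻¹ ≤ 1 := inv_le_one_of_one_le₀ (by linarith)
  unfold edgeProb edgeKernel
  split_ifs with h
  · calc _ ≤ ∫⁻ z : Fin d → UnitAddCircle,
          unifI (Set.Iic ((min ((w i * w j / (μ * k)) / ‖z‖ ^ d) 1) ^ γ)) := by
          refine lintegral_mono fun z => measure_mono (Set.Iic_subset_Iic.2 ?_)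
          rw [div_div]
          exact mul_le_of_le_one_left (by positivity) hq
      _ ≤ ENNReal.ofReal (C1 d γ * (w i * w j / (μ * k))) :=
          lintegral_geometric_le hd hγ (by positivity)
      _ ≤ _ := by
          refine ENNReal.ofReal_le_ofReal ?_
          calc C1 d γ * (w i * w j / (μ * k)) ≤ (C1 d γ + 1) * (w i * w j / (μ * k)) := by
                gcongr
                linarith
            _ = _ := by rw [div_mul_div_comm, mul_div_assoc (C1 d γ + 1)]
  · have hvol : volume (Set.univ : Set (Fin d → UnitAddCircle)) = 1 := by
      rw [← Set.pi_univ Set.univ, volume_pi_pi]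
      simp
    rw [lintegral_const, hvol, mul_one]
    refine (unifI_Iic_le _).trans (ENNReal.ofReal_le_ofReal ?_)
    calc (1 + C1 d γ)⁻¹ * pIRG n μ w i j ≤ 1 * (w i * w j / (μ * n)) := by
          unfold pIRG
          gcongr
          exact min_le_left _ _
      _ ≤ (C1 d γ + 1) * (w i * w j / (μ * n)) := by
          gcongr
          linarith
      _ = _ := by rw [div_mul_div_comm, mul_div_assoc (C1 d γ + 1)]

theorem prod_path_mul_endpoints {p : ℕ} (v : Fin (p + 1) → ℝ) :
    (∏ i : Fin p, v i.castSucc * v i.succ) * (v 0 * v (Fin.last p)) = ∏ i, v i ^ 2 := by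
  rw [Finset.prod_mul_distrib, Finset.prod_pow, sq]
  nth_rewrite 1 [Fin.prod_univ_castSucc]
  rw [Fin.prod_univ_succ]
  ring

/-- Lemma C.1: under `H₁`, the probability that all the edges of a path of distinct vertices
are present factorizes over the edges, and if `m` of the consecutive pairs are type-B/type-B
then it is `O(w_{a₁}⁻¹ w_{a_p}⁻¹ Π_i w_{a_i}² / (k^m n^(p-m-1)))`, uniformly over the
choice of path. -/
theorem path_probability_H1
    (τ C w0 : ℝ) (hτ1 : 2 < τ) (hτ2 : τ < 3) (hC : 0 < C) (hw0 : 0 < w0)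
    (hCw : C = w0 ^ (τ - 1))
    (γ : ℝ) (hγ : 1 < γ) (d : ℕ) (hd : 1 ≤ d)
    (k : ℕ → ℕ) (hkn : ∀ n, k n ≤ n)
    (hko : (fun n : ℕ => (k n : ℝ)) =o[atTop] fun n : ℕ => (n : ℝ))
    (w : (n : ℕ) → Fin n → ℝ) (hww0 : ∀ n (i : Fin n), w0 ≤ w n i)
    (hA1 : Assumption1 τ C w0 w)
    (hA2 : Assumption2 τ C w0 k w)
    :
    (∀ (n p : ℕ), 1 ≤ p → ∀ a : Fin (p + 1) → Fin n, Function.Injective a →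
      H1Measure n d {ω | ∀ i : Fin p,
          edgeH1 n (k n) d γ (muPar τ C w0) (w n) ω (a i.castSucc) (a i.succ)}
        = ∏ i : Fin p, H1Measure n d {ω |
            edgeH1 n (k n) d γ (muPar τ C w0) (w n) ω (a i.castSucc) (a i.succ)}) ∧
    (∀ p : ℕ, 1 ≤ p → ∃ K > (0:ℝ), ∀ (n : ℕ) (a : Fin (p + 1) → Fin n),
      Function.Injective a →
      (H1Measure n d {ω | ∀ i : Fin p,
          edgeH1 n (k n) d γ (muPar τ C w0) (w n) ω (a i.castSucc) (a i.succ)}).toReal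
        ≤ K * ((∏ i : Fin (p + 1), w n (a i) ^ 2)
            / (w n (a 0) * w n (a (Fin.last p))
              * (k n : ℝ) ^ pathGeoCount n (k n) p a
              * (n : ℝ) ^ (p - pathGeoCount n (k n) p a)))) := by
  have hμ : 0 < muPar τ C w0 := by
    have h1 : 0 < τ - 1 := by linarith
    have h2 : 0 < τ - 2 := by linarith
    unfold muPar
    positivity
  have hwpos : ∀ n (i : Fin n), 0 < w n i := fun n i => hw0.trans_le (hww0 n i)
  refine ⟨fun n p _ a ha => ?_, fun p _ => ⟨((C1 d γ + 1) / muPar τ C w0) ^ p, ?_, ?_⟩⟩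
  · rw [H1Measure_path _ _ _ _ _ _ a ha]
    exact Finset.prod_congr rfl fun i _ =>
      (H1Measure_edge _ _ _ _ _ _ fun h => i.castSucc_lt_succ.ne (ha h)).symm
  · have := C1_pos d hγ
    positivity
  · intro n a ha
    have hC := C1_pos d hγ
    set B : Fin p → ℝ := fun i => if (a i.castSucc).val < k n ∧ (a i.succ).val < k n
      then (k n : ℝ) else n with hB
    have hBprod : ∏ i, B i = (k n : ℝ) ^ pathGeoCount n (k n) p a
        * (n : ℝ) ^ (p - pathGeoCount n (k n) p a) := by
      rw [hB, Finset.prod_ite, Finset.prod_const, Finset.prod_const, pathGeoCount,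
        Finset.filter_not, Finset.card_sdiff_of_subset (Finset.filter_subset _ _),
        Finset.card_univ, Fintype.card_fin]
    have hB0 : ∀ i, 0 ≤ B i := fun i => by
      simp only [hB]
      split_ifs <;> positivity
    have hterm : ∀ i : Fin p, 0 ≤ (C1 d γ + 1) / muPar τ C w0 *
        (w n (a i.castSucc) * w n (a i.succ) / B i) := fun i => by
      have := hwpos n (a i.castSucc)
      have := hwpos n (a i.succ)
      have := hB0 i
      positivity
    have hle : H1Measure n d {ω | ∀ i : Fin p,
          edgeH1 n (k n) d γ (muPar τ C w0) (w n) ω (a i.castSucc) (a i.succ)}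
        ≤ ENNReal.ofReal (∏ i : Fin p, (C1 d γ + 1) / muPar τ C w0 *
            (w n (a i.castSucc) * w n (a i.succ) / B i)) := by
      rw [H1Measure_path _ _ _ _ _ _ a ha, ENNReal.ofReal_prod_of_nonneg fun i _ => hterm i]
      exact Finset.prod_le_prod' fun i _ => edgeProb_le hd hγ hμ (w n) (hwpos n) _ _
    refine (ENNReal.toReal_le_of_le_ofReal (Finset.prod_nonneg fun i _ => hterm i) hle).trans_eq ?_
    have h0 := (hwpos n (a 0)).ne'
    have hl := (hwpos n (a (Fin.last p))).ne'
    rw [Finset.prod_mul_distrib, Finset.prod_const, Finset.card_univ, Fintype.card_fin,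
      Finset.prod_div_distrib, hBprod, ← prod_path_mul_endpoints fun i => w n (a i), mul_assoc
      (w n (a 0) * w n (a (Fin.last p))), mul_comm (∏ i : Fin p, _), mul_div_mul_left _ _
      (mul_ne_zero h0 hl)]
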